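/- One has ρ_2 = ∫_ℝ (2·(s − log 2)² + 2·(s − log 2))·η_log(s) ds = 3π²/20 + 2·(log 2)² − (24/π²)·ζ(3)·log 2, where ζ is the Riemann zeta function. -/

import Mathlib

open MeasureTheory

/-- The limiting density of the logarithm of smallest denominators. -/
noncomputable def etaLog (s : ℝ) : ℝ :=
  if s ≤ 0 then 6 / Real.pi ^ 2 * Real.exp (2 * s)
  else if s ≤ Real.log 2 then 6 / Real.pi ^ 2 * (-Real.exp (2 * s) + 2 + 4 * s)
  else 6 / Real.pi ^ 2 * (-Real.exp (2 * s) + 2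
    + 2 * Real.exp (2 * s) * Real.sqrt (1 / 4 - Real.exp (-2 * s))
    - 4 * Real.log (1 / 2 + Real.sqrt (1 / 4 - Real.exp (-2 * s))))


lemma log_poly_bound {y : ℝ} (h0 : 0 < y) (h1 : y ≤ 1/4) :
    |(Real.log (1 + 2*y) - 2 * Real.log (1 + y)) - (-y^2 + 2*y^3 - 7/2*y^4)| ≤ 68 * y^5 := by
  have a := Real.abs_log_sub_add_sum_range_le (x := -(2*y)) (by rw [abs_neg, abs_of_pos (by positivity)]; linarith) 4
  have b := Real.abs_log_sub_add_sum_range_le (x := -y) (by rw [abs_neg, abs_of_pos (by positivity)]; linarith) 4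
  rw [abs_neg, abs_of_pos (show 0 < 2*y by positivity)] at a
  rw [abs_neg, abs_of_pos h0] at b
  have a' : (2*y)^(4+1) / (1 - 2*y) ≤ 64 * y^5 := by
    rw [div_le_iff₀ (by linarith)]
    have := mul_nonneg (pow_pos h0 5).le (show 0 ≤ 1/4 - y by linarith)
    ring_nf at this ⊢
    nlinarith [pow_pos h0 5]
  have b' : y^(4+1) / (1 - y) ≤ 2 * y^5 := by
    rw [div_le_iff₀ (by linarith)]
    have := mul_nonneg (pow_pos h0 5).le (show 0 ≤ 1/4 - y by linarith)
    ring_nf at this ⊢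
    nlinarith [pow_pos h0 5]
  have a2 := abs_le.1 (a.trans a')
  have b2 := abs_le.1 (b.trans b')
  simp only [Finset.sum_range_succ, Finset.sum_range_zero, sub_neg_eq_add] at a2 b2
  norm_num at a2 b2
  rw [abs_le]
  constructor <;> nlinarith [a2.1, a2.2, b2.1, b2.2]

lemma gammaSeq_ratio {e : ℝ} (he : 0 < e) {n : ℕ} (hn : n ≠ 0) :
    Real.GammaSeq e n ^ 2 / Real.GammaSeq (2*e) n * (e/2) =
      Real.exp (∑ i ∈ Finset.range n, (Real.log (1 + 2*(e/(i+1:ℕ))) - 2 * Real.log (1 + e/(i+1:ℕ)))) := by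
  have hn' : (0:ℝ) < n := by exact_mod_cast Nat.pos_of_ne_zero hn
  have e1 : ∀ i : ℕ, Real.exp (Real.log (1 + 2*(e/(i+1:ℕ))) - 2 * Real.log (1 + e/(i+1:ℕ)))
      = (2*e + (i+1:ℕ)) * (i+1:ℕ) / (e + (i+1:ℕ))^2 := by
    intro i
    have : (0:ℝ) < (i+1:ℕ) := by positivity
    rw [Real.exp_sub, Real.exp_log (by positivity), two_mul (Real.log _), Real.exp_add, Real.exp_log (by positivity)]
    field_simp
    ring
  rw [Real.exp_sum, Finset.prod_congr rfl (fun i _ => e1 i)]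
  rw [Finset.prod_div_distrib, Finset.prod_mul_distrib, Finset.prod_pow]
  unfold Real.GammaSeq
  rw [Finset.prod_range_succ', Finset.prod_range_succ']
  have hf : ((n.factorial : ℕ) : ℝ) = ∏ i ∈ Finset.range n, ((i+1:ℕ):ℝ) := by
    rw [← Finset.prod_range_add_one_eq_factorial]; push_cast; rfl
  rw [← hf]
  have p1 : 0 < ∏ i ∈ Finset.range n, (e + ((i+1:ℕ):ℝ)) := Finset.prod_pos (fun i _ => by positivity)
  have p2 : 0 < ∏ i ∈ Finset.range n, (2*e + ((i+1:ℕ):ℝ)) := Finset.prod_pos (fun i _ => by positivity)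
  have p3 : (n:ℝ)^(2*e) = ((n:ℝ)^e)^2 := by
    rw [two_mul, Real.rpow_add hn', sq]
  have p4 : 0 < (n:ℝ)^e := by positivity
  have p5 : (0:ℝ) < n.factorial := by positivity
  rw [p3]
  simp only [Nat.cast_zero, add_zero]
  field_simp

lemma hasSum_shift {k : ℕ} {a : ℝ} (hk : k ≠ 0) (h : HasSum (fun n : ℕ => (1:ℝ) / (n:ℝ)^k) a) :
    HasSum (fun n : ℕ => (1:ℝ) / ((n+1:ℕ):ℝ)^k) a := by
  rw [← hasSum_nat_add_iff' 1] at h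
  simpa [hk] using h

lemma zeta3 : HasSum (fun n : ℕ => (1:ℝ) / (n:ℝ)^3) (riemannZeta 3).re := by
  have h := zeta_nat_eq_tsum_of_gt_one (k := 3) (by norm_num)
  have hs : Summable (fun n : ℕ => (1:ℝ) / (n:ℝ)^3) := Real.summable_one_div_nat_pow.2 (by norm_num)
  have h2 : riemannZeta 3 = ((∑' n : ℕ, (1:ℝ) / (n:ℝ)^3 : ℝ) : ℂ) := by
    push_cast at h ⊢
    exact h
  rw [h2, Complex.ofReal_re]
  exact hs.hasSum

lemma gamma_ratio : ∃ K : ℝ, ∀ e : ℝ, 0 < e → e ≤ 1/4 → ∃ h : ℝ,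
    Real.Gamma e ^ 2 / Real.Gamma (2*e) * (e/2) = Real.exp h ∧
    |h - (-(Real.pi^2/6) * e^2 + 2 * (riemannZeta 3).re * e^3 - 7/2 * (Real.pi^4/90) * e^4)| ≤ K * e^5 := by
  have hs5 : Summable (fun n : ℕ => (1:ℝ) / ((n+1:ℕ):ℝ)^5) :=
    (hasSum_shift (by norm_num) (Real.summable_one_div_nat_pow.2 (by norm_num : 1 < 5)).hasSum).summable
  refine ⟨68 * ∑' n : ℕ, (1:ℝ) / ((n+1:ℕ):ℝ)^5, fun e he he1 => ?_⟩
  have z2 := (hasSum_shift (by norm_num) hasSum_zeta_two).mul_left (-(e^2))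
  have z3 := (hasSum_shift (by norm_num) zeta3).mul_left (2 * e^3)
  have z4 := (hasSum_shift (by norm_num) hasSum_zeta_four).mul_left (7/2 * e^4)
  have zP := (z2.add z3).sub z4
  set a : ℕ → ℝ := fun i => Real.log (1 + 2*(e/(i+1:ℕ))) - 2 * Real.log (1 + e/(i+1:ℕ)) with ha
  set P : ℕ → ℝ := _ with hP
  change HasSum P _ at zP
  have hb : ∀ i, ‖a i - P i‖ ≤ 68 * e^5 * ((1:ℝ) / ((i+1:ℕ):ℝ)^5) := by
    intro i
    have hi : (1:ℝ) ≤ (i+1:ℕ) := by exact_mod_cast Nat.succ_le_succ (Nat.zero_le i)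
    have := log_poly_bound (y := e/(i+1:ℕ)) (by positivity) ((div_le_self he.le hi).trans he1)
    rw [Real.norm_eq_abs]
    refine le_trans (le_of_eq ?_) (this.trans (le_of_eq ?_))
    · simp only [ha, hP]
      congr 1
      field_simp
    · field_simp
  have hs := (hs5.hasSum.mul_left (68 * e^5))
  have hsum : Summable (fun i => a i - P i) := Summable.of_norm_bounded hs.summable hb
  have hS := tsum_of_norm_bounded hs hb
  have hA : HasSum a (∑' i, (a i - P i) + (-(e^2) * (Real.pi^2/6) + 2 * e^3 * (riemannZeta 3).re - 7/2 * e^4 * (Real.pi^4/90))) := by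
    have := hsum.hasSum.add zP
    simpa using this
  refine ⟨(∑' i, (a i - P i)) + (-(e^2) * (Real.pi^2/6) + 2 * e^3 * (riemannZeta 3).re - 7/2 * e^4 * (Real.pi^4/90)), ?_, ?_⟩
  · have t1 := (Real.continuous_exp.tendsto _).comp hA.tendsto_sum_nat
    have t2 := (((Real.GammaSeq_tendsto_Gamma e).pow 2).div (Real.GammaSeq_tendsto_Gamma (2*e)) (Real.Gamma_pos_of_pos (by positivity)).ne').mul_const (e/2)
    refine tendsto_nhds_unique t2 (t1.congr' ?_)
    filter_upwards [Filter.eventually_ne_atTop 0] with n hn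
    exact (gammaSeq_ratio he hn).symm
  · rw [Real.norm_eq_abs] at hS
    refine le_trans (le_of_eq ?_) (hS.trans (le_of_eq ?_))
    · congr 1; ring
    · ring

noncomputable def wdens (u : ℝ) : ℝ := 1 / Real.sqrt (1 - Real.exp (-2*u)) - 1

lemma exp_lt_one' {u : ℝ} (hu : 0 < u) : Real.exp (-2*u) < 1 := by
  rw [Real.exp_lt_one_iff]; linarith

lemma wdens_nonneg {u : ℝ} (hu : 0 < u) : 0 ≤ wdens u := by
  unfold wdens
  have h := exp_lt_one' hu
  have h1 : 0 < Real.sqrt (1 - Real.exp (-2*u)) := Real.sqrt_pos.2 (by linarith)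
  have h2 : Real.sqrt (1 - Real.exp (-2*u)) ≤ 1 := by
    rw [Real.sqrt_le_one]; linarith [Real.exp_pos (-2*u)]
  rw [sub_nonneg, le_div_iff₀ h1]; linarith

lemma wdens_le {u : ℝ} (hu : 0 < u) :
    wdens u ≤ Real.exp (-2*u) * (1 + 2*u) * u^(-(1/2):ℝ) := by
  have h := exp_lt_one' hu
  have hp := Real.exp_pos (-2*u)
  have hR : 0 < Real.sqrt (1 - Real.exp (-2*u)) := Real.sqrt_pos.2 (by linarith)
  have hsq := Real.sq_sqrt (show 0 ≤ 1 - Real.exp (-2*u) by linarith)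
  have hle : Real.exp (-2*u) * (1 + 2*u) ≤ 1 := by
    have := Real.add_one_le_exp (2*u)
    have h3 : Real.exp (-2*u) * Real.exp (2*u) = 1 := by rw [← Real.exp_add]; simp
    nlinarith
  unfold wdens
  set R := Real.sqrt (1 - Real.exp (-2*u)) with hRd
  set y := Real.exp (-2*u)
  have hu2 : u^(-(1/2):ℝ) = 1 / Real.sqrt u := by
    rw [Real.rpow_neg hu.le, ← Real.sqrt_eq_rpow, one_div]
  rw [hu2]
  have hs : 0 < Real.sqrt u := Real.sqrt_pos.2 hu
  have hss := Real.sq_sqrt hu.le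
  have key : Real.sqrt u ≤ (1 + 2*u) * R := by
    rw [Real.sqrt_le_left (by positivity), mul_pow, hsq]
    nlinarith
  have hR1 : R ≤ 1 := by nlinarith
  have e1 : 1 / R - 1 = (1 - R) / R := by field_simp
  rw [e1, div_le_iff₀ hR]
  have : 1 - R ≤ y := by nlinarith
  refine this.trans ?_
  rw [mul_assoc, mul_assoc]
  refine le_mul_of_one_le_right hp.le ?_
  have : (1 + 2*u) * (1 / Real.sqrt u * R) = ((1+2*u) * R) / Real.sqrt u := by ring
  rw [this, le_div_iff₀ hs]
  linarith

lemma wdens_meas : Measurable wdens := by unfold wdens; fun_prop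

lemma wdens_int (j : ℕ) : IntegrableOn (fun u => u^j * wdens u) (Set.Ioi 0) := by
  have i1 := integrableOn_rpow_mul_exp_neg_mul_rpow (p := 1) (s := j + (-(1/2))) (b := 2)
    (by have : (0:ℝ) ≤ j := by positivity
        linarith) one_pos two_pos
  have i2 := integrableOn_rpow_mul_exp_neg_mul_rpow (p := 1) (s := (j+1:ℕ) + (-(1/2))) (b := 2)
    (by have : (0:ℝ) ≤ (j+1:ℕ) := by positivity
        linarith) one_pos two_pos
  have i3 := i1.add (i2.const_mul 2)
  refine Integrable.mono' i3 ?_ ?_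
  · exact ((measurable_id.pow_const j).mul wdens_meas).aestronglyMeasurable
  · filter_upwards [ae_restrict_mem measurableSet_Ioi] with u hu
    have hu : 0 < u := hu
    rw [Real.norm_eq_abs, abs_of_nonneg (mul_nonneg (by positivity) (wdens_nonneg hu))]
    simp only [Pi.add_apply, Real.rpow_one]
    rw [Real.rpow_add hu, Real.rpow_add hu, Real.rpow_natCast, Real.rpow_natCast, pow_succ]
    have := mul_le_mul_of_nonneg_left (wdens_le hu) (show 0 ≤ u^j by positivity)
    refine this.trans (le_of_eq ?_)
    ring

lemma beta_real {a b : ℝ} (ha : 0 < a) (hb : 0 < b) :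
    ∫ x in Set.Ioo (0:ℝ) 1, x^(a-1) * (1-x)^(b-1) = Real.Gamma a * Real.Gamma b / Real.Gamma (a+b) := by
  have h := ProbabilityTheory.beta_eq_betaIntegralReal a b ha hb
  unfold ProbabilityTheory.beta at h
  rw [h, Complex.betaIntegral, intervalIntegral.integral_of_le zero_le_one, integral_Ioc_eq_integral_Ioo]
  rw [← Complex.ofReal_re (∫ x in Set.Ioo (0:ℝ) 1, x^(a-1) * (1-x)^(b-1)), ← integral_complex_ofReal]
  congr 1
  refine setIntegral_congr_fun measurableSet_Ioo ?_
  intro x hx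
  simp only [Complex.ofReal_mul]
  rw [Complex.ofReal_cpow hx.1.le, Complex.ofReal_cpow (by linarith [hx.2])]
  push_cast
  rfl

lemma exp_image : Set.image (fun u : ℝ => Real.exp (-2*u)) (Set.Ioi 0) = Set.Ioo 0 1 := by
  ext y
  constructor
  · rintro ⟨u, hu, rfl⟩
    exact ⟨Real.exp_pos _, exp_lt_one' hu⟩
  · rintro ⟨h0, h1⟩
    refine ⟨-(Real.log y)/2, ?_, ?_⟩
    · have := Real.log_neg h0 h1
      simp only [Set.mem_Ioi]; linarith
    · simp only
      rw [show -2 * (-(Real.log y)/2) = Real.log y by ring, Real.exp_log h0]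

lemma beta_int {e : ℝ} (he : 0 < e) :
    ∫ u in Set.Ioi (0:ℝ), Real.exp (-2*e*u) * (1 / Real.sqrt (1 - Real.exp (-2*u)))
      = 1/2 * (Real.Gamma e * Real.Gamma (1/2) / Real.Gamma (e+1/2)) := by
  rw [← beta_real he (by norm_num), ← exp_image]
  rw [integral_image_eq_integral_abs_deriv_smul (f' := fun u => Real.exp (-2*u) * (-2)) measurableSet_Ioi]
  · rw [← integral_const_mul]
    refine setIntegral_congr_fun measurableSet_Ioi ?_
    intro u hu
    have h := exp_lt_one' hu
    simp only [smul_eq_mul]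
    rw [abs_mul, abs_of_pos (Real.exp_pos _), show (1/2 - 1 : ℝ) = -(1/2) by norm_num,
      Real.rpow_neg (by linarith), ← Real.sqrt_eq_rpow, ← Real.exp_mul, abs_neg, abs_of_pos (two_pos)]
    rw [show -2*e*u = -2*u + -2*u*(e-1) by ring, Real.exp_add]
    ring
  · intro u hu
    apply HasDerivAt.hasDerivWithinAt
    have := ((hasDerivAt_id u).const_mul (-2)).exp
    simpa using this
  · intro a _ b _ hab
    have := Real.exp_injective hab
    linarith

lemma wexp_int {e : ℝ} (he : 0 < e) :
    IntegrableOn (fun u => Real.exp (-2*e*u) * wdens u) (Set.Ioi 0) := by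
  have h0 := wdens_int 0
  simp only [pow_zero, one_mul] at h0
  refine Integrable.mono' h0 ?_ ?_
  · exact ((by fun_prop : Measurable fun u => Real.exp (-2*e*u)).mul wdens_meas).aestronglyMeasurable
  · filter_upwards [ae_restrict_mem measurableSet_Ioi] with u hu
    have hu : 0 < u := hu
    rw [Real.norm_eq_abs, abs_of_nonneg (mul_nonneg (Real.exp_pos _).le (wdens_nonneg hu))]
    refine mul_le_of_le_one_left (wdens_nonneg hu) ?_
    rw [Real.exp_le_one_iff]
    have := mul_pos he hu
    linarith

lemma F_eq {e : ℝ} (he : 0 < e) :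
    1 + 2*e*(∫ u in Set.Ioi (0:ℝ), Real.exp (-2*e*u) * wdens u)
      = Real.exp (2 * Real.log 2 * e) * (Real.Gamma e ^ 2 / Real.Gamma (2*e) * (e/2)) := by
  have i1 := wexp_int he
  have i2 : IntegrableOn (fun u => Real.exp (-2*e*u)) (Set.Ioi 0) :=
    integrableOn_exp_mul_Ioi (by linarith) 0
  have v2 : ∫ u in Set.Ioi (0:ℝ), Real.exp (-2*e*u) = 1/(2*e) := by
    rw [integral_exp_mul_Ioi (by linarith)]
    simp
  have s : (∫ u in Set.Ioi (0:ℝ), Real.exp (-2*e*u) * wdens u) + 1/(2*e) =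
      1/2 * (Real.Gamma e * Real.Gamma (1/2) / Real.Gamma (e+1/2)) := by
    rw [← beta_int he, ← v2, ← integral_add i1 i2]
    congr 1; ext u; unfold wdens; ring
  have d := Real.Gamma_mul_Gamma_add_half e
  have g1 := Real.Gamma_pos_of_pos he
  have g2 := Real.Gamma_pos_of_pos (show 0 < 2*e by linarith)
  have g3 := Real.Gamma_pos_of_pos (show 0 < e+1/2 by linarith)
  have hpi : 0 < Real.sqrt Real.pi := Real.sqrt_pos.2 Real.pi_pos
  rw [Real.Gamma_one_half_eq] at s
  have hx : (2:ℝ)^(1-2*e) = 2 / Real.exp (2 * Real.log 2 * e) := by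
    rw [Real.rpow_sub two_pos, Real.rpow_one, Real.rpow_def_of_pos two_pos]
    congr 2; ring
  rw [hx] at d
  have hE := Real.exp_pos (2 * Real.log 2 * e)
  have s' : 1 + 2*e*(∫ u in Set.Ioi (0:ℝ), Real.exp (-2*e*u) * wdens u) =
    2*e*(1/2 * (Real.Gamma e * Real.sqrt Real.pi / Real.Gamma (e+1/2))) := by
    rw [← s]; field_simp; ring
  rw [s']
  field_simp at d ⊢
  linear_combination (-1) * d

lemma exp_neg_taylor {x : ℝ} (hx : 0 ≤ x) :
    |Real.exp (-x) - (1 - x + x^2/2 - x^3/6)| ≤ 4 * x^4 := by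
  rcases le_or_gt x 1 with h | h
  · have := Real.exp_bound (x := -x) (by rwa [abs_neg, abs_of_nonneg hx]) (n := 4) (by norm_num)
    rw [abs_neg, abs_of_nonneg hx] at this
    simp only [Finset.sum_range_succ, Finset.sum_range_zero] at this
    norm_num [Nat.factorial] at this
    refine le_trans (le_of_eq ?_) (this.trans ?_)
    · congr 1; ring
    · nlinarith [pow_nonneg hx 4]
  · have h1 := Real.exp_pos (-x)
    have h2 : Real.exp (-x) ≤ 1 := by rw [Real.exp_le_one_iff]; linarith
    have a1 : x ≤ x^4 := le_self_pow₀ h.le (by norm_num)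
    have a2 : x^2 ≤ x^4 := pow_le_pow_right₀ h.le (by norm_num)
    have a3 : x^3 ≤ x^4 := pow_le_pow_right₀ h.le (by norm_num)
    have a4 : 0 ≤ x^2 := by positivity
    have a5 : 0 ≤ x^3 := by positivity
    rw [abs_le]; constructor <;> linarith

noncomputable def mom (j : ℕ) : ℝ := ∫ u in Set.Ioi (0:ℝ), u^j * wdens u

lemma F_taylor {e : ℝ} (he : 0 < e) :
    |(∫ u in Set.Ioi (0:ℝ), Real.exp (-2*e*u) * wdens u)
      - (mom 0 - 2*e*mom 1 + 2*e^2*mom 2 - 4/3*e^3*mom 3)| ≤ 64*e^4*mom 4 := by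
  have i0 := wdens_int 0
  have i1 := (wdens_int 1).const_mul (2*e)
  have i2 := (wdens_int 2).const_mul (2*e^2)
  have i3 := (wdens_int 3).const_mul (4/3*e^3)
  have i4 := (wdens_int 4).const_mul (64*e^4)
  unfold mom
  rw [← integral_const_mul, ← integral_const_mul, ← integral_const_mul, ← integral_const_mul]
  have k1 : Integrable (fun u => u^0 * wdens u - 2*e*(u^1 * wdens u)) (volume.restrict (Set.Ioi 0)) := i0.sub i1
  have k2 : Integrable (fun u => u^0 * wdens u - 2*e*(u^1 * wdens u) + 2*e^2*(u^2 * wdens u)) (volume.restrict (Set.Ioi 0)) := k1.add i2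
  have hsum : Integrable (fun u => u^0 * wdens u - 2*e*(u^1 * wdens u) + 2*e^2*(u^2 * wdens u) - 4/3*e^3*(u^3 * wdens u)) (volume.restrict (Set.Ioi 0)) := k2.sub i3
  have e1 : (∫ u in Set.Ioi (0:ℝ), u^0 * wdens u) - (∫ u in Set.Ioi (0:ℝ), 2*e*(u^1 * wdens u))
     + (∫ u in Set.Ioi (0:ℝ), 2*e^2*(u^2 * wdens u)) - (∫ u in Set.Ioi (0:ℝ), 4/3*e^3*(u^3 * wdens u))
     = ∫ u in Set.Ioi (0:ℝ), (u^0 * wdens u - 2*e*(u^1 * wdens u) + 2*e^2*(u^2 * wdens u) - 4/3*e^3*(u^3 * wdens u)) := by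
    rw [← integral_sub i0 i1, ← integral_add k1 i2, ← integral_sub k2 i3]
  rw [e1, ← integral_sub (wexp_int he) hsum, ← Real.norm_eq_abs]
  refine norm_integral_le_of_norm_le i4 ?_
  filter_upwards [ae_restrict_mem measurableSet_Ioi] with u hu
  have hu : 0 < u := hu
  have hw := wdens_nonneg hu
  have := exp_neg_taylor (x := 2*e*u) (by positivity)
  have e2 : Real.exp (-2*e*u) * wdens u - (u^0 * wdens u - 2*e*(u^1 * wdens u) + 2*e^2*(u^2 * wdens u) - 4/3*e^3*(u^3 * wdens u))
     = (Real.exp (-(2*e*u)) - (1 - (2*e*u) + (2*e*u)^2/2 - (2*e*u)^3/6)) * wdens u := by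
    rw [show -2*e*u = -(2*e*u) by ring]; ring
  change ‖Real.exp (-2*e*u) * wdens u - (u^0 * wdens u - 2*e*(u^1 * wdens u) + 2*e^2*(u^2 * wdens u) - 4/3*e^3*(u^3 * wdens u))‖ ≤ _
  rw [e2, Real.norm_eq_abs, abs_mul, abs_of_nonneg hw]
  refine (mul_le_mul_of_nonneg_right this hw).trans (le_of_eq ?_)
  ring

open Asymptotics Filter Topology in
lemma peel {a : ℝ} {f : ℝ → ℝ} (hf : Continuous f) (n : ℕ)
    (h : (fun e => a + e * f e) =O[𝓝[>] 0] (fun e : ℝ => e^(n+1))) :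
    a = 0 ∧ f =O[𝓝[>] 0] (fun e : ℝ => e^n) := by
  have ha : a = 0 := by
    have t1 : Tendsto (fun e : ℝ => e^(n+1)) (𝓝[>] 0) (𝓝 0) := by
      have : Continuous (fun e : ℝ => e^(n+1)) := by fun_prop
      have := this.tendsto 0
      simp only [ne_eq, Nat.succ_ne_zero, not_false_eq_true, zero_pow] at this
      exact this.mono_left nhdsWithin_le_nhds
    have t2 := h.trans_tendsto t1
    have t3 : Tendsto (fun e => a + e * f e) (𝓝[>] 0) (𝓝 a) := by
      have : Continuous (fun e : ℝ => a + e * f e) := by fun_prop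
      have := this.tendsto 0
      simp only [zero_mul, add_zero] at this
      exact this.mono_left nhdsWithin_le_nhds
    exact tendsto_nhds_unique t3 t2
  refine ⟨ha, ?_⟩
  subst ha
  have := (isBigO_refl (fun e : ℝ => e⁻¹) (𝓝[>] 0)).mul h
  refine (this.congr' ?_ ?_)
  · filter_upwards [self_mem_nhdsWithin] with e he
    have : (0:ℝ) < e := he
    field_simp; ring
  · filter_upwards [self_mem_nhdsWithin] with e he
    have : (0:ℝ) < e := he
    field_simp
    ring

open Asymptotics Filter Topology in
lemma mom3_abs (a b c d K : ℝ) (F : ℝ → ℝ) (m0 m1 m2 m3 M : ℝ)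
    (hF : ∀ e, 0 < e → |F e - (m0 - 2*e*m1 + 2*e^2*m2 - 4/3*e^3*m3)| ≤ M * e^4)
    (h : ∀ e, 0 < e → e ≤ 1/4 → ∃ z : ℝ, 1 + 2*e*F e = Real.exp z ∧
      |z - (a*e + b*e^2 + c*e^3 + d*e^4)| ≤ K * e^5) :
    -8/3*m3 = d + (b^2+2*a*c)/2 + a^2*b/2 + a^4/24 := by
  have hev : ∀ᶠ e : ℝ in 𝓝[>] 0, 0 < e ∧ e ≤ 1/4 := by
    have : Set.Ioc (0:ℝ) (1/4) ∈ 𝓝[>] (0:ℝ) := Ioc_mem_nhdsGT (by norm_num)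
    exact this
  set z : ℝ → ℝ := fun e => Real.log (1 + 2*e*F e) with hz
  have hz1 : ∀ e, 0 < e → e ≤ 1/4 → 1 + 2*e*F e = Real.exp (z e) ∧
      |z e - (a*e + b*e^2 + c*e^3 + d*e^4)| ≤ K * e^5 := by
    intro e h0 h1
    obtain ⟨y, hy, hy2⟩ := h e h0 h1
    have : z e = y := by simp only [hz, hy, Real.log_exp]
    rw [this]; exact ⟨hy, hy2⟩
  set p : ℝ → ℝ := fun e => a*e + b*e^2 + c*e^3 + d*e^4 with hp
  have hpc : Continuous p := by fun_prop
  have lim0 : ∀ f : ℝ → ℝ, Continuous f → Tendsto f (𝓝[>] 0) (𝓝 (f 0)) := fun f hf =>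
    (hf.tendsto 0).mono_left nhdsWithin_le_nhds
  have bd : ∀ f : ℝ → ℝ, Continuous f → f =O[𝓝[>] 0] (fun _ => (1:ℝ)) := fun f hf =>
    (lim0 f hf).isBigO_one ℝ
  have ofc : ∀ (f : ℝ → ℝ) (n : ℕ), Continuous f → (fun e => e^n * f e) =O[𝓝[>] 0] (fun e : ℝ => e^n) := by
    intro f n hf
    simpa using (isBigO_refl (fun e : ℝ => e^n) (𝓝[>] 0)).mul (bd f hf)
  have p0 : Tendsto p (𝓝[>] 0) (𝓝 0) := by simpa [hp] using lim0 p hpc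
  have pO : p =O[𝓝[>] 0] (fun e : ℝ => e) := by
    have := ofc (fun e => a + b*e + c*e^2 + d*e^3) 1 (by fun_prop)
    simp only [pow_one] at this
    refine this.congr_left ?_
    intro e; simp only [hp]; ring
  have zp : (fun e => z e - p e) =O[𝓝[>] 0] (fun e : ℝ => e^5) := by
    refine IsBigO.of_bound K ?_
    filter_upwards [hev] with e he
    rw [Real.norm_eq_abs, Real.norm_eq_abs, abs_of_pos (pow_pos he.1 5)]
    exact (hz1 e he.1 he.2).2
  have e5 : Tendsto (fun e : ℝ => e^5) (𝓝[>] 0) (𝓝 0) := by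
    have := lim0 (fun e => e^5) (by fun_prop)
    simp only [ne_eq, OfNat.ofNat_ne_zero, not_false_eq_true, zero_pow] at this
    exact this
  have s1 : (fun e => Real.exp (z e) - Real.exp (p e)) =O[𝓝[>] 0] (fun e : ℝ => e^5) := by
    have q := (Real.exp_sub_sum_range_isBigO_pow 1).comp_tendsto (zp.trans_tendsto e5)
    have q2 : (fun e => Real.exp (z e - p e) - 1) =O[𝓝[>] 0] (fun e : ℝ => e^5) := by
      refine IsBigO.trans (q.congr ?_ ?_) zp
      · intro e; simp
      · intro e; simp
    have q3 := (bd (fun e => Real.exp (p e)) (by fun_prop)).mul q2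
    refine q3.congr ?_ ?_
    · intro e; simp only [mul_sub, ← Real.exp_add]; simp
    · intro e; simp
  have s2 : (fun e => Real.exp (p e) - (1 + p e + p e^2/2 + p e^3/6 + p e^4/24)) =O[𝓝[>] 0] (fun e : ℝ => e^5) := by
    have q := (Real.exp_sub_sum_range_isBigO_pow 5).comp_tendsto p0
    refine (q.congr_left ?_).trans (pO.pow 5)
    intro e
    simp [Finset.sum_range_succ, Nat.factorial]
  have s3 : (fun e => (1 + p e + p e^2/2 + p e^3/6 + p e^4/24) -
      (1 + a*e + (b + a^2/2)*e^2 + (c + a*b + a^3/6)*e^3 + (d + (b^2+2*a*c)/2 + a^2*b/2 + a^4/24)*e^4))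
      =O[𝓝[>] 0] (fun e : ℝ => e^5) := by
    refine (ofc (fun e => (2*b*c+2*a*d + e*(c^2+2*b*d) + 2*c*d*e^2 + d^2*e^3)/2
      + (3*a^2*(c+d*e) + 3*a*(b+c*e+d*e^2)^2 + e*(b+c*e+d*e^2)^3)/6
      + (4*a^3*(b+c*e+d*e^2) + 6*a^2*e*(b+c*e+d*e^2)^2 + 4*a*e^2*(b+c*e+d*e^2)^3 + e^3*(b+c*e+d*e^2)^4)/24) 5
      (by fun_prop)).congr_left ?_
    intro e; simp only [hp]; ring
  have s4 : (fun e => 1 + 2*e*(m0 - 2*e*m1 + 2*e^2*m2 - 4/3*e^3*m3) - Real.exp (z e)) =O[𝓝[>] 0] (fun e : ℝ => e^5) := by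
    refine IsBigO.of_bound (2*M) ?_
    filter_upwards [hev] with e he
    rw [← (hz1 e he.1 he.2).1, Real.norm_eq_abs, Real.norm_eq_abs, abs_of_pos (pow_pos he.1 5)]
    have := mul_le_mul_of_nonneg_left (hF e he.1) (show 0 ≤ 2*e by linarith [he.1])
    refine le_trans (le_of_eq ?_) (this.trans (le_of_eq ?_))
    · rw [← abs_of_pos (show 0 < 2*e by linarith [he.1]), ← abs_mul, abs_of_pos (show 0 < 2*e by linarith [he.1]), abs_sub_comm]
      congr 1; ring
    · ring
  have tot := ((s4.add s1).add s2).add s3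
  have t0 := peel (a := 0) (f := fun e => (2*m0 - a) + e*((-4*m1 - (b+a^2/2)) + e*((4*m2 - (c+a*b+a^3/6)) + e*((-8/3*m3 - (d + (b^2+2*a*c)/2 + a^2*b/2 + a^4/24)) + e*0)))) (by fun_prop) 4
    (tot.congr_left (fun e => by ring))
  have t1 := peel (by fun_prop) 3 t0.2
  have t2 := peel (by fun_prop) 2 t1.2
  have t3 := peel (by fun_prop) 1 t2.2
  have t4 := peel (by fun_prop) 0 t3.2
  linarith [t4.1]

lemma mom3_eq : 8/3 * mom 3 = Real.pi^4/40 + Real.pi^2 * Real.log 2^2 / 3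
    - 4 * (riemannZeta 3).re * Real.log 2 - 2/3 * Real.log 2^4 := by
  obtain ⟨K, hK⟩ := gamma_ratio
  have := mom3_abs (2*Real.log 2) (-(Real.pi^2/6)) (2 * (riemannZeta 3).re) (-(7/2 * (Real.pi^4/90))) K
    (fun e => ∫ u in Set.Ioi (0:ℝ), Real.exp (-2*e*u) * wdens u) (mom 0) (mom 1) (mom 2) (mom 3) (64 * mom 4)
    (fun e he => (F_taylor he).trans (le_of_eq (by ring)))
    (fun e he he1 => by
      obtain ⟨h, h1, h2⟩ := hK e he he1
      refine ⟨2 * Real.log 2 * e + h, ?_, ?_⟩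
      · rw [F_eq he, h1, Real.exp_add]
      · refine le_trans (le_of_eq ?_) h2
        congr 1; ring)
  linear_combination (-1) * this

lemma d_exp2 (u : ℝ) : HasDerivAt (fun u => Real.exp (2*u)) (2 * Real.exp (2*u)) u := by
  have h : HasDerivAt (fun u : ℝ => 2*u) (2*1) u := (hasDerivAt_id u).const_mul 2
  have := h.exp
  convert this using 1
  ring

noncomputable def g3 (u : ℝ) : ℝ := -4 * Real.exp (2*u) + 2
    + 4 * Real.exp (2*u) * Real.sqrt (1 - Real.exp (-2*u))
    - 4 * Real.log ((1 + Real.sqrt (1 - Real.exp (-2*u))) / 2)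

lemma exp_two_log_two : Real.exp (2 * Real.log 2) = 4 := by
  rw [two_mul, Real.exp_add, Real.exp_log two_pos]; norm_num

lemma exp_shift (u : ℝ) : Real.exp (2 * (u + Real.log 2)) = 4 * Real.exp (2*u) := by
  rw [mul_add, Real.exp_add, exp_two_log_two]; ring

lemma eta1 {u : ℝ} (hu : u ≤ -Real.log 2) :
    etaLog (u + Real.log 2) = 6 / Real.pi^2 * (4 * Real.exp (2*u)) := by
  unfold etaLog
  rw [if_pos (by linarith), exp_shift]

lemma eta2 {u : ℝ} (hu : -Real.log 2 < u) (hu2 : u ≤ 0) :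
    etaLog (u + Real.log 2) = 6 / Real.pi^2 * (-4 * Real.exp (2*u) + 2 + 4 * (u + Real.log 2)) := by
  unfold etaLog
  rw [if_neg (by linarith), if_pos (by linarith), exp_shift]; ring

lemma eta3 {u : ℝ} (hu : 0 < u) :
    etaLog (u + Real.log 2) = 6 / Real.pi^2 * g3 u := by
  have hl := Real.log_pos one_lt_two
  have e1 : Real.exp (-2 * (u + Real.log 2)) = Real.exp (-2*u) / 4 := by
    rw [mul_add, Real.exp_add, show -2 * Real.log 2 = -(2 * Real.log 2) by ring, Real.exp_neg (2 * Real.log 2), exp_two_log_two]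
    ring
  have e2 : Real.sqrt (1/4 - Real.exp (-2*u) / 4) = Real.sqrt (1 - Real.exp (-2*u)) / 2 := by
    rw [show 1/4 - Real.exp (-2*u) / 4 = (1 - Real.exp (-2*u)) / 2^2 by ring, Real.sqrt_div' _ (by positivity),
      Real.sqrt_sq (by norm_num)]
  unfold etaLog g3
  rw [if_neg (by linarith), if_neg (by linarith), exp_shift, e1, e2,
    show 1/2 + Real.sqrt (1 - Real.exp (-2*u)) / 2 = (1 + Real.sqrt (1 - Real.exp (-2*u))) / 2 by ring]
  ring

lemma log_bound {u : ℝ} (hu : 0 < u) :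
    Real.log ((1 + Real.sqrt (1 - Real.exp (-2*u))) / 2) ≤ 0 ∧
    -Real.exp (-2*u) ≤ Real.log ((1 + Real.sqrt (1 - Real.exp (-2*u))) / 2) ∧
    0 ≤ g3 u ∧ g3 u ≤ 2 * Real.exp (-2*u) := by
  have h := exp_lt_one' hu
  have hp := Real.exp_pos (-2*u)
  have hR : 0 < Real.sqrt (1 - Real.exp (-2*u)) := Real.sqrt_pos.2 (by linarith)
  have hsq := Real.sq_sqrt (show 0 ≤ 1 - Real.exp (-2*u) by linarith)
  have hinv : Real.exp (2*u) = 1 / Real.exp (-2*u) := by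
    rw [show -2*u = -(2*u) by ring, Real.exp_neg]; simp
  unfold g3
  rw [hinv]
  set R := Real.sqrt (1 - Real.exp (-2*u)) with hRd
  set y := Real.exp (-2*u)
  have hR1 : R < 1 := by nlinarith
  have hq : 1 - R ≤ y := by nlinarith
  have hy : y = (1-R)*(1+R) := by linarith
  have l1 := Real.log_le_sub_one_of_pos (show 0 < (1+R)/2 by positivity)
  have l2 := Real.one_sub_inv_le_log_of_pos (show 0 < (1+R)/2 by positivity)
  have hi : 1 - ((1+R)/2)⁻¹ = -((1-R)/(1+R)) := by field_simp; ring
  have hb : (1-R)/(1+R) ≤ y := by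
    rw [div_le_iff₀ (by positivity)]; nlinarith
  have hg : -4 * (1/y) + 2 + 4 * (1/y) * R = -2 * ((1-R)/(1+R)) := by
    rw [hy]
    have : 1 - R ≠ 0 := by linarith
    field_simp; ring
  rw [hg]
  rw [hi] at l2
  have hc : (1-R)/(1+R) ≤ 1-R := div_le_self (by linarith) (by linarith)
  refine ⟨by linarith, by linarith, by linarith, by linarith⟩

lemma R_deriv {u : ℝ} (hu : 0 < u) : HasDerivAt (fun u => Real.sqrt (1 - Real.exp (-2*u)))
    (Real.exp (-2*u) / Real.sqrt (1 - Real.exp (-2*u))) u := by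
  have h := exp_lt_one' hu
  have h1 : HasDerivAt (fun u => 1 - Real.exp (-2*u)) (2 * Real.exp (-2*u)) u := by
    have h0 : HasDerivAt (fun u : ℝ => -2*u) (-2*1) u := (hasDerivAt_id u).const_mul (-2)
    have := h0.exp.const_sub 1
    refine HasDerivAt.congr_deriv this ?_
    ring
  convert h1.sqrt (by linarith) using 1
  field_simp

noncomputable def B3 (u : ℝ) : ℝ := u^2 * g3 u
  - 8/3 * (u^3 * Real.log ((1 + Real.sqrt (1 - Real.exp (-2*u))) / 2))

lemma B3_deriv {u : ℝ} (hu : 0 < u) :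
    HasDerivAt B3 ((2*u^2 + 2*u) * g3 u - 8/3 * (u^3 * wdens u)) u := by
  have h := exp_lt_one' hu
  have hp := Real.exp_pos (-2*u)
  have hR : 0 < Real.sqrt (1 - Real.exp (-2*u)) := Real.sqrt_pos.2 (by linarith)
  have hsq := Real.sq_sqrt (show 0 ≤ 1 - Real.exp (-2*u) by linarith)
  have hinv : Real.exp (2*u) = 1 / Real.exp (-2*u) := by
    rw [show -2*u = -(2*u) by ring, Real.exp_neg]; simp
  have d1 := R_deriv hu
  have d2 : HasDerivAt (fun u => Real.exp (2*u)) (2 * Real.exp (2*u)) u := by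
    exact d_exp2 u
  have d3 := ((d1.const_add 1).div_const 2).log (by positivity)
  have d4 := (((d2.const_mul (-4)).add_const 2).add ((d2.const_mul 4).mul d1)).sub (d3.const_mul 4)
  have d5 := ((hasDerivAt_pow 2 u).mul d4).sub (((hasDerivAt_pow 3 u).mul d3).const_mul (8/3))
  have d6 : HasDerivAt B3 _ u := d5
  convert d6 using 1
  simp only [Pi.add_apply, Pi.sub_apply, Pi.mul_apply]
  unfold g3 wdens
  rw [hinv]
  set R := Real.sqrt (1 - Real.exp (-2*u)) with hRd
  set y := Real.exp (-2*u)
  set l := Real.log ((1+R)/2)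
  have hy : y = (1-R)*(1+R) := by linarith
  have hR1 : R < 1 := by nlinarith
  have hR2 : 1 - R ≠ 0 := by linarith
  rw [hy]
  field_simp
  push_cast
  ring

lemma poly_exp_tendsto (n : ℕ) : Filter.Tendsto (fun u : ℝ => u^n * Real.exp (-2*u)) Filter.atTop (nhds 0) := by
  refine squeeze_zero' ?_ ?_ (Real.tendsto_pow_mul_exp_neg_atTop_nhds_zero n)
  · filter_upwards [Filter.eventually_ge_atTop 0] with u hu
    positivity
  · filter_upwards [Filter.eventually_ge_atTop 0] with u hu
    gcongr
    linarith

lemma B3_tendsto : Filter.Tendsto B3 Filter.atTop (nhds 0) := by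
  have t1 : Filter.Tendsto (fun u => u^2 * g3 u) Filter.atTop (nhds 0) := by
    have t := (poly_exp_tendsto 2).const_mul 2
    rw [mul_zero] at t
    refine squeeze_zero' ?_ ?_ t
    · filter_upwards [Filter.eventually_gt_atTop 0] with u hu
      exact mul_nonneg (by positivity) (log_bound hu).2.2.1
    · filter_upwards [Filter.eventually_gt_atTop 0] with u hu
      have := mul_le_mul_of_nonneg_left (log_bound hu).2.2.2 (show 0 ≤ u^2 by positivity)
      linarith
  have t2 : Filter.Tendsto (fun u : ℝ => u^3 * Real.log ((1 + Real.sqrt (1 - Real.exp (-2*u))) / 2)) Filter.atTop (nhds 0) := by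
    have t := (poly_exp_tendsto 3).neg
    rw [neg_zero] at t
    refine tendsto_of_tendsto_of_tendsto_of_le_of_le' t tendsto_const_nhds ?_ ?_
    · filter_upwards [Filter.eventually_gt_atTop 0] with u hu
      have := mul_le_mul_of_nonneg_left (log_bound hu).2.1 (show 0 ≤ u^3 by positivity)
      linarith
    · filter_upwards [Filter.eventually_gt_atTop 0] with u hu
      exact mul_nonpos_of_nonneg_of_nonpos (by positivity) (log_bound hu).1
  have t := t1.sub (t2.const_mul (8/3))
  rw [mul_zero, sub_zero] at t
  exact t

lemma g3_int : IntegrableOn (fun u => (2*u^2 + 2*u) * g3 u) (Set.Ioi 0) := by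
  have k : ∀ n : ℕ, IntegrableOn (fun u : ℝ => u^n * Real.exp (-2*u)) (Set.Ioi 0) := by
    intro n
    have := integrableOn_rpow_mul_exp_neg_mul_rpow (p := 1) (s := n) (b := 2)
      (by have : (0:ℝ) ≤ n := by positivity
          linarith) one_pos two_pos
    simpa using this
  have i3 := ((k 2).const_mul 4).add ((k 1).const_mul 4)
  refine Integrable.mono' i3 ?_ ?_
  · have : Measurable g3 := by unfold g3; fun_prop
    exact (by fun_prop : Measurable (fun u => (2*u^2 + 2*u) * g3 u)).aestronglyMeasurable
  · filter_upwards [ae_restrict_mem measurableSet_Ioi] with u hu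
    have hu : 0 < u := hu
    have hb := log_bound hu
    rw [Real.norm_eq_abs, abs_of_nonneg (mul_nonneg (by positivity) hb.2.2.1)]
    simp only [Pi.add_apply]
    have := mul_le_mul_of_nonneg_left hb.2.2.2 (show 0 ≤ 2*u^2+2*u by positivity)
    linarith

lemma I3 : ∫ u in Set.Ioi (0:ℝ), (2*u^2 + 2*u) * g3 u = 8/3 * mom 3 := by
  have hw := (wdens_int 3).const_mul (8/3)
  have hB : ContinuousWithinAt B3 (Set.Ici 0) 0 := by
    apply ContinuousAt.continuousWithinAt
    unfold B3 g3
    have : (1 + Real.sqrt (1 - Real.exp (-2*0))) / 2 ≠ 0 := by positivity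
    fun_prop (disch := assumption)
  have := integral_Ioi_of_hasDerivAt_of_tendsto hB (fun u hu => B3_deriv hu) (g3_int.sub hw) B3_tendsto
  rw [integral_sub g3_int hw, integral_const_mul] at this
  have b0 : B3 0 = 0 := by simp [B3]
  rw [b0] at this
  unfold mom
  linarith

lemma neg_quad {u : ℝ} (hu : u ≤ 0) : |2*u^2+2*u| ≤ 8 * Real.exp (-u) := by
  have := Real.quadratic_le_exp_of_nonneg (show 0 ≤ -u by linarith)
  rw [abs_le]; constructor <;> nlinarith [sq_nonneg u]

lemma I1_int : IntegrableOn (fun u : ℝ => (2*u^2 + 2*u) * (4 * Real.exp (2*u))) (Set.Iic (-Real.log 2)) := by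
  have hl := Real.log_pos one_lt_two
  refine Integrable.mono' ((integrableOn_exp_Iic (-Real.log 2)).const_mul 32) ?_ ?_
  · exact (by fun_prop : Continuous (fun u : ℝ => (2*u^2 + 2*u) * (4 * Real.exp (2*u)))).aestronglyMeasurable
  · filter_upwards [ae_restrict_mem measurableSet_Iic] with u hu
    have hu : u ≤ -Real.log 2 := hu
    rw [Real.norm_eq_abs, abs_mul, abs_of_pos (show 0 < 4 * Real.exp (2*u) by positivity)]
    have := mul_le_mul_of_nonneg_right (neg_quad (show u ≤ 0 by linarith)) (show 0 ≤ 4 * Real.exp (2*u) by positivity)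
    refine this.trans (le_of_eq ?_)
    have : Real.exp u = Real.exp (-u) * Real.exp (2*u) := by rw [← Real.exp_add]; congr 1; ring
    rw [this]; ring


lemma exp_neg2L : Real.exp (2 * -Real.log 2) = 1/4 := by
  rw [mul_neg, Real.exp_neg, exp_two_log_two]; norm_num

lemma I1 : ∫ u in Set.Iic (-Real.log 2), (2*u^2 + 2*u) * (4 * Real.exp (2*u)) = Real.log 2^2 := by
  have := integral_Iic_of_hasDerivAt_of_tendsto' (f := fun u => 4 * (u^2 * Real.exp (2*u))) (m := 0)
    (a := -Real.log 2) (f' := fun u => (2*u^2 + 2*u) * (4 * Real.exp (2*u))) ?_ I1_int ?_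
  · rw [this, exp_neg2L]; ring
  · intro u _
    have := ((hasDerivAt_pow 2 u).mul (d_exp2 u)).const_mul 4
    refine HasDerivAt.congr_deriv this ?_
    push_cast; ring
  · have := (poly_exp_tendsto 2).comp Filter.tendsto_neg_atBot_atTop
    have := this.const_mul 4
    simpa [Function.comp_def] using this

lemma I2 : ∫ u in Set.Ioc (-Real.log 2) 0, (2*u^2 + 2*u) * (-4 * Real.exp (2*u) + 2 + 4 * (u + Real.log 2))
    = -Real.log 2^2 + 2/3 * Real.log 2^4 := by
  have hl := Real.log_pos one_lt_two
  rw [← intervalIntegral.integral_of_le (by linarith)]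
  rw [intervalIntegral.integral_eq_sub_of_hasDerivAt
    (f := fun u => u^2 * (-4 * Real.exp (2*u) + 2 + 4 * (u + Real.log 2)) + 8 * (u^4/4 + Real.log 2 * (u^3/3)))]
  · simp only [exp_neg2L]; ring
  · intro u _
    have d := ((hasDerivAt_pow 2 u).mul ((((d_exp2 u).const_mul (-4)).add_const 2).add
      (((hasDerivAt_id u).add_const (Real.log 2)).const_mul 4))).add
      ((((hasDerivAt_pow 4 u).div_const 4).add (((hasDerivAt_pow 3 u).div_const 3).const_mul (Real.log 2))).const_mul 8)
    refine HasDerivAt.congr_deriv d ?_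
    simp only [Pi.add_apply, id]
    push_cast; ring
  · exact (by fun_prop : Continuous _).intervalIntegrable _ _

theorem rho_two :
    (∫ s : ℝ, (2 * (s - Real.log 2) ^ 2 + 2 * (s - Real.log 2)) * etaLog s) =
      3 * Real.pi ^ 2 / 20 + 2 * Real.log 2 ^ 2
        - 24 / Real.pi ^ 2 * (riemannZeta 3).re * Real.log 2 := by
  have hl := Real.log_pos one_lt_two
  rw [← integral_add_right_eq_self _ (Real.log 2)]
  simp only [add_sub_cancel_right]
  set C := 6 / Real.pi^2 with hC
  set f : ℝ → ℝ := fun u => (2*u^2 + 2*u) * etaLog (u + Real.log 2) with hf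
  have c1 : Set.EqOn (fun u => C * ((2*u^2 + 2*u) * (4 * Real.exp (2*u)))) f (Set.Iic (-Real.log 2)) := by
    intro u hu
    simp only [hf, eta1 hu]; ring
  have c2 : Set.EqOn (fun u => C * ((2*u^2 + 2*u) * (-4 * Real.exp (2*u) + 2 + 4 * (u + Real.log 2)))) f (Set.Ioc (-Real.log 2) 0) := by
    intro u hu
    simp only [hf, eta2 hu.1 hu.2]; ring
  have c3 : Set.EqOn (fun u => C * ((2*u^2 + 2*u) * g3 u)) f (Set.Ioi 0) := by
    intro u hu
    simp only [hf, eta3 hu]; ring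
  have n1 : IntegrableOn f (Set.Iic (-Real.log 2)) :=
    IntegrableOn.congr_fun (I1_int.const_mul C) c1 measurableSet_Iic
  have n2 : IntegrableOn f (Set.Ioc (-Real.log 2) 0) :=
    IntegrableOn.congr_fun ((by fun_prop : Continuous (fun u => C * ((2*u^2 + 2*u) * (-4 * Real.exp (2*u) + 2 + 4 * (u + Real.log 2))))).integrableOn_Ioc) c2 measurableSet_Ioc
  have n3 : IntegrableOn f (Set.Ioi 0) :=
    IntegrableOn.congr_fun (g3_int.const_mul C) c3 measurableSet_Ioi
  have hU : Set.Ioc (-Real.log 2) 0 ∪ Set.Ioi 0 = Set.Ioi (-Real.log 2) := Set.Ioc_union_Ioi_eq_Ioi (by linarith)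
  have n23 : IntegrableOn f (Set.Ioi (-Real.log 2)) := by
    rw [← hU]; exact n2.union n3
  rw [← intervalIntegral.integral_Iic_add_Ioi n1 n23, ← hU,
    setIntegral_union (Set.Ioc_disjoint_Ioi le_rfl) measurableSet_Ioi n2 n3,
    ← setIntegral_congr_fun measurableSet_Iic c1, ← setIntegral_congr_fun measurableSet_Ioc c2,
    ← setIntegral_congr_fun measurableSet_Ioi c3, integral_const_mul, integral_const_mul, integral_const_mul,
    I1, I2, I3, mom3_eq, hC]
  have := Real.pi_pos
  field_simp
  ring
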